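/- (Formal solution is a generalized solution, 1D version of Theorem 4) Let 0<α<1, T>0, and let the Sturm–Liouville eigendata (λ_i, X_i) on [0,l] satisfy the stated hypotheses. Let (c_i) be real numbers with ∑_{i=1}^∞ λ_i² c_i² < ∞ and suppose u₀(x) = ∑_{i=1}^∞ c_i X_i(x) converges uniformly on [0,l]. Then: (i) the partial sums u_k(x,t) = ∑_{i=1}^k c_i E_α(−λ_i t^α) X_i(x) converge uniformly on [0,l]×[0,T] to a continuous function u; (ii) each u_k is a classical solution of (D_t^α u_k)(x,t) = ∂/∂x(p(x) ∂u_k/∂x) − q(x) u_k on (0,l)×(0,T) with u_k(0,t)=u_k(l,t)=0 and initial values u_k(x,0) = ∑_{i=1}^k c_i X_i(x); and (iii) these initial values converge uniformly on [0,l] to u₀. Hence u is a generalized solution of the initial-boundary-value problem with initial condition u₀ and zero boundary conditions. -/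

import Mathlib

open MeasureTheory Set Filter

/-- The Caputo fractional derivative of order `α` of `f` at `t`:
`(D^α f)(t) = (1/Γ(1−α)) ∫₀ᵗ (t−s)^{−α} f'(s) ds`. -/
noncomputable def caputo (α : ℝ) (f : ℝ → ℝ) (t : ℝ) : ℝ :=
  (1 / Real.Gamma (1 - α)) * ∫ s in (0:ℝ)..t, (t - s) ^ (-α) * deriv f s

/-- The two-parameter Mittag-Leffler function `E_{α,β}(z) = ∑_{k≥0} z^k/Γ(αk+β)`;
`E_α = E_{α,1}`. -/
noncomputable def ml (α β z : ℝ) : ℝ := ∑' k : ℕ, z ^ k / Real.Gamma (α * k + β)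

/-- `w` is a classical solution of the homogeneous one-dimensional time-fractional
diffusion equation `(D_t^α w)(x,t) = ∂/∂x(p(x) ∂w/∂x) − q(x)w` on `(0,l)×(0,T)` with
zero Dirichlet boundary conditions. -/
def IsClassicalSolution1D (α T l : ℝ) (p q : ℝ → ℝ) (w : ℝ → ℝ → ℝ) : Prop :=
  ContinuousOn (fun z : ℝ × ℝ => w z.1 z.2) (Set.Icc 0 l ×ˢ Set.Icc 0 T) ∧
  (∀ x ∈ Set.Ioo (0:ℝ) l, ∀ t ∈ Set.Ioo (0:ℝ) T,
    caputo α (w x) t = deriv (fun y => p y * deriv (fun z => w z t) y) x - q x * w x t) ∧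
  (∀ t ∈ Set.Icc (0:ℝ) T, w 0 t = 0 ∧ w l t = 0)

/-- `u` is a generalized solution (in the sense of Vladimirov) of the
initial-boundary-value problem with initial condition `u₀` and zero Dirichlet
boundary conditions: `u` is continuous on `[0,l]×[0,T]` and a uniform limit of
classical solutions whose initial values converge uniformly to `u₀`. -/
def IsGeneralizedSolution1D (α T l : ℝ) (p q : ℝ → ℝ) (u₀ : ℝ → ℝ)
    (u : ℝ → ℝ → ℝ) : Prop :=
  ContinuousOn (fun z : ℝ × ℝ => u z.1 z.2) (Set.Icc 0 l ×ˢ Set.Icc 0 T) ∧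
  ∃ w : ℕ → ℝ → ℝ → ℝ,
    (∀ k, IsClassicalSolution1D α T l p q (w k)) ∧
    TendstoUniformlyOn (fun k x => w k x 0) u₀ Filter.atTop (Set.Icc 0 l) ∧
    TendstoUniformlyOn (fun k (z : ℝ × ℝ) => w k z.1 z.2) (fun z : ℝ × ℝ => u z.1 z.2)
      Filter.atTop (Set.Icc 0 l ×ˢ Set.Icc 0 T)


open Topology in
lemma ml_ratio {α s : ℝ} (hα : 0 < α) (hα1 : α < 1) (hs : 0 < s) :
    Real.Gamma s / Real.Gamma (s + α) ≤ (s + α) ^ (1 - α) / s := by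
  have h1 := Real.Gamma_mul_add_mul_le_rpow_Gamma_mul_rpow_Gamma (s := s + α) (t := s + α + 1)
    (a := α) (b := 1 - α) (by positivity) (by positivity) hα (by linarith) (by ring)
  have e : α * (s + α) + (1 - α) * (s + α + 1) = s + 1 := by ring
  have hG : 0 < Real.Gamma (s + α) := Real.Gamma_pos_of_pos (by positivity)
  rw [e, Real.Gamma_add_one hs.ne', Real.Gamma_add_one (by positivity : s + α ≠ 0),
    Real.mul_rpow (by positivity) hG.le] at h1
  have e2 : Real.Gamma (s + α) ^ α * ((s + α) ^ (1 - α) * Real.Gamma (s + α) ^ (1 - α))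
      = (s + α) ^ (1 - α) * Real.Gamma (s + α) := by
    have : Real.Gamma (s + α) ^ α * Real.Gamma (s + α) ^ (1 - α) = Real.Gamma (s + α) := by
      rw [← Real.rpow_add hG]; simp
    calc _ = (s + α) ^ (1 - α) * (Real.Gamma (s + α) ^ α * Real.Gamma (s + α) ^ (1 - α)) := by ring
      _ = _ := by rw [this]
  rw [e2] at h1
  rw [div_le_div_iff₀ hG hs]
  linarith

open Topology in
lemma ml_ratio_tendsto {α : ℝ} (hα : 0 < α) (hα1 : α < 1) :
    Tendsto (fun s : ℝ => Real.Gamma s / Real.Gamma (s + α)) atTop (𝓝 0) := by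
  have h0 : Tendsto (fun s : ℝ => 2 * s ^ (-α)) atTop (𝓝 0) := by
    simpa using (tendsto_rpow_neg_atTop hα).const_mul 2
  refine tendsto_of_tendsto_of_tendsto_of_le_of_le' tendsto_const_nhds h0 ?_ ?_
  · filter_upwards [eventually_gt_atTop 0] with s hs
    exact div_nonneg (Real.Gamma_pos_of_pos hs).le (Real.Gamma_pos_of_pos (by positivity)).le
  · filter_upwards [eventually_gt_atTop 1] with s hs
    have hs0 : 0 < s := by linarith
    refine (ml_ratio hα hα1 hs0).trans ?_
    rw [div_le_iff₀ hs0]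
    have : (s + α) ^ (1 - α) ≤ (2 * s) ^ (1 - α) :=
      Real.rpow_le_rpow (by positivity) (by linarith) (by linarith)
    refine this.trans ?_
    rw [Real.mul_rpow (by norm_num) hs0.le]
    have e : s ^ (1 - α) = s ^ (-α) * s := by
      rw [sub_eq_neg_add, Real.rpow_add hs0, Real.rpow_one]
    rw [e]
    have h2 : (2 : ℝ) ^ (1 - α) ≤ 2 ^ (1 : ℝ) :=
      Real.rpow_le_rpow_of_exponent_le (by norm_num) (by linarith)
    rw [Real.rpow_one] at h2
    have : 0 ≤ s ^ (-α) * s := by positivity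
    nlinarith

open Topology in
lemma ml_summable {α β : ℝ} (hα : 0 < α) (hα1 : α < 1) (hβ : 0 < β) (z : ℝ) :
    Summable fun k : ℕ => z ^ k / Real.Gamma (α * k + β) := by
  by_cases hz : z = 0
  · apply summable_of_ne_finset_zero (s := {0})
    intro b hb
    simp at hb
    simp [hz, hb]
  have hG : ∀ k : ℕ, 0 < Real.Gamma (α * k + β) := fun k => Real.Gamma_pos_of_pos (by positivity)
  refine summable_of_ratio_test_tendsto_lt_one (l := 0) (by norm_num) ?_ ?_
  · exact Eventually.of_forall fun k => div_ne_zero (pow_ne_zero _ hz) (hG k).ne'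
  · have h1 : Tendsto (fun k : ℕ => α * (k : ℝ) + β) atTop atTop :=
      tendsto_atTop_add_const_right _ _ (tendsto_natCast_atTop_atTop.const_mul_atTop hα)
    have h2 := ((ml_ratio_tendsto hα hα1).comp h1).const_mul |z|
    rw [mul_zero] at h2
    refine h2.congr fun k => ?_
    have e : α * ((k + 1 : ℕ) : ℝ) + β = α * k + β + α := by push_cast; ring
    have hG' := hG (k + 1)
    rw [e] at hG'
    simp only [Function.comp, norm_div, norm_pow, Real.norm_eq_abs]
    rw [e, abs_of_pos (hG k), abs_of_pos hG']
    have hz' : |z| ^ k ≠ 0 := pow_ne_zero _ (abs_ne_zero.2 hz)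
    have := (hG k).ne'
    have := hG'.ne'
    field_simp
    ring

lemma ml_hasDerivAt {α β : ℝ} (hα : 0 < α) (hα1 : α < 1) (hβ : 0 < β) (z : ℝ) :
    HasDerivAt (ml α β) (∑' k : ℕ, (k * z ^ (k - 1)) / Real.Gamma (α * k + β)) z := by
  have hG : ∀ k : ℕ, 0 < Real.Gamma (α * k + β) := fun k => Real.Gamma_pos_of_pos (by positivity)
  set R : ℝ := |z| + 1 with hR
  have hR1 : 1 ≤ R := by have := abs_nonneg z; linarith
  suffices key : HasDerivAt (fun z : ℝ => ∑' k : ℕ, z ^ k / Real.Gamma (α * k + β))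
      (∑' k : ℕ, (k * z ^ (k - 1)) / Real.Gamma (α * k + β)) z from key
  refine hasDerivAt_tsum_of_isPreconnected (t := Metric.ball 0 R) (y₀ := (0 : ℝ))
    (g := fun (k : ℕ) (z : ℝ) => z ^ k / Real.Gamma (α * k + β))
    (g' := fun (k : ℕ) (z : ℝ) => (k * z ^ (k - 1)) / Real.Gamma (α * k + β))
    (u := fun k : ℕ => (2 * R) ^ k / Real.Gamma (α * k + β))
    (ml_summable hα hα1 hβ _) Metric.isOpen_ball (convex_ball _ _).isPreconnected
    (fun n y _ => ((hasDerivAt_pow n y).div_const _)) ?_ ?_ (ml_summable hα hα1 hβ 0) ?_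
  · intro n y hy
    rw [norm_div, Real.norm_of_nonneg (hG n).le]
    refine div_le_div_of_nonneg_right ?_ (hG n).le
    rw [norm_mul, norm_pow, mul_pow, Real.norm_natCast]
    have hy' : ‖y‖ ≤ R := by simpa using (mem_ball_zero_iff.1 hy).le
    gcongr
    · exact_mod_cast Nat.lt_two_pow_self.le
    · calc ‖y‖ ^ (n - 1) ≤ R ^ (n - 1) := by gcongr
        _ ≤ R ^ n := pow_le_pow_right₀ hR1 (Nat.sub_le _ _)
  · simp; linarith
  · simp [hR]

lemma ml_hasDerivAt_one {α : ℝ} (hα : 0 < α) (hα1 : α < 1) (z : ℝ) :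
    HasDerivAt (ml α 1) (ml α α z / α) z := by
  convert ml_hasDerivAt hα hα1 one_pos z using 1
  have hk : ∀ k : ℕ, ((k + 1 : ℕ) * z ^ (k + 1 - 1)) / Real.Gamma (α * (k + 1 : ℕ) + 1)
      = z ^ k / Real.Gamma (α * k + α) / α := by
    intro k
    have hpos : 0 < α * ((k + 1 : ℕ) : ℝ) := by positivity
    rw [Real.Gamma_add_one hpos.ne']
    have e : α * ((k + 1 : ℕ) : ℝ) = α * k + α := by push_cast; ring
    have hG : 0 < Real.Gamma (α * k + α) := Real.Gamma_pos_of_pos (by positivity)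
    have h1 : ((k : ℝ) + 1) ≠ 0 := by positivity
    rw [e]
    generalize Real.Gamma (α * k + α) = G at hG ⊢
    have h3 : α * (k : ℝ) + α = α * (k + 1) := by ring
    rw [h3]
    push_cast
    field_simp
  have hs : Summable fun k : ℕ => z ^ k / Real.Gamma (α * k + α) / α :=
    (ml_summable hα hα1 hα z).div_const α
  rw [tsum_eq_zero_add' (by simpa only [hk] using hs), ml, ← tsum_div_const]
  simp only [hk]
  simp

lemma ml_continuous {α β : ℝ} (hα : 0 < α) (hα1 : α < 1) (hβ : 0 < β) : Continuous (ml α β) :=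
  continuous_iff_continuousAt.2 fun z => (ml_hasDerivAt hα hα1 hβ z).continuousAt

lemma ml_zero {α : ℝ} : ml α 1 0 = 1 := by
  rw [ml, tsum_eq_single 0]
  · simp
  · intro b hb; simp [hb]

lemma beta_real {a b t : ℝ} (ha : 0 < a) (hb : 0 < b) (ht : 0 < t) :
    ∫ s in (0:ℝ)..t, (t - s) ^ (b - 1) * s ^ (a - 1) =
      t ^ (a + b - 1) * (Real.Gamma a * Real.Gamma b / Real.Gamma (a + b)) := by
  have h := Complex.betaIntegral_scaled a b ht
  rw [Complex.betaIntegral_eq_Gamma_mul_div _ _ (by simpa) (by simpa)] at h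
  have h2 : ∫ x in (0:ℝ)..t, (x : ℂ) ^ ((a:ℂ) - 1) * ((t : ℂ) - x) ^ ((b:ℂ) - 1)
      = ((∫ s in (0:ℝ)..t, (t - s) ^ (b - 1) * s ^ (a - 1) : ℝ) : ℂ) := by
    rw [← intervalIntegral.integral_ofReal, intervalIntegral.integral_of_le ht.le,
      intervalIntegral.integral_of_le ht.le]
    refine setIntegral_congr_fun measurableSet_Ioc fun x hx => ?_
    rw [Complex.ofReal_mul, Complex.ofReal_cpow hx.1.le, Complex.ofReal_cpow (by linarith [hx.2])]
    push_cast
    ring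
  rw [h2, ← Complex.ofReal_add, Complex.Gamma_ofReal, Complex.Gamma_ofReal, Complex.Gamma_ofReal,
    ← Complex.ofReal_one, ← Complex.ofReal_sub, ← Complex.ofReal_cpow ht.le] at h
  exact_mod_cast h

lemma beta_int {a b t : ℝ} (ha : 0 < a) (hb : 0 < b) (ht : 0 < t) :
    IntervalIntegrable (fun s : ℝ => (t - s) ^ (b - 1) * s ^ (a - 1)) volume 0 t := by
  by_contra hn
  have h := intervalIntegral.integral_undef hn
  rw [beta_real ha hb ht] at h
  have := Real.Gamma_pos_of_pos ha
  have := Real.Gamma_pos_of_pos hb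
  have := Real.Gamma_pos_of_pos (add_pos ha hb)
  have : 0 < t ^ (a + b - 1) * (Real.Gamma a * Real.Gamma b / Real.Gamma (a + b)) := by positivity
  linarith

lemma mlt_hasDerivAt {α : ℝ} (hα : 0 < α) (hα1 : α < 1) (L : ℝ) {t : ℝ} (ht : 0 < t) :
    HasDerivAt (fun t : ℝ => ml α 1 (-L * t ^ α))
      (-L * (t ^ (α - 1) * ml α α (-L * t ^ α))) t := by
  have h1 : HasDerivAt (fun t : ℝ => -L * t ^ α) (-L * (α * t ^ (α - 1))) t :=
    (Real.hasDerivAt_rpow_const (Or.inl ht.ne')).const_mul _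
  have h2 := (ml_hasDerivAt_one hα hα1 (-L * t ^ α)).comp t h1
  refine h2.congr_deriv ?_
  field_simp

lemma mlt_continuous {α β : ℝ} (hα : 0 < α) (hα1 : α < 1) (hβ : 0 < β) (L : ℝ) :
    Continuous (fun t : ℝ => ml α β (-L * t ^ α)) :=
  (ml_continuous hα hα1 hβ).comp (continuous_const.mul (Real.continuous_rpow_const hα.le))

lemma mlt_deriv_int {α : ℝ} (hα : 0 < α) (hα1 : α < 1) (L t : ℝ) :
    IntervalIntegrable (fun s : ℝ => -L * (s ^ (α - 1) * ml α α (-L * s ^ α))) volume 0 t :=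
  ((intervalIntegral.intervalIntegrable_rpow' (by linarith)).mul_continuousOn
    (mlt_continuous hα hα1 hα L).continuousOn).const_mul _

lemma mlt_caputo_int {α : ℝ} (hα : 0 < α) (hα1 : α < 1) (L : ℝ) {t : ℝ} (ht : 0 < t) :
    IntervalIntegrable (fun s : ℝ => (t - s) ^ (-α) *
      (-L * (s ^ (α - 1) * ml α α (-L * s ^ α)))) volume 0 t := by
  have h := ((beta_int hα (by linarith : 0 < 1 - α) ht).mul_continuousOn
    (mlt_continuous hα hα1 hα L).continuousOn).const_mul (-L)
  convert h using 2 with s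
  rw [show 1 - α - 1 = -α by ring]
  ring

lemma mlt_caputo_eq {α : ℝ} (hα : 0 < α) (hα1 : α < 1) (L : ℝ) {t : ℝ} (ht : 0 < t) :
    ∫ s in (0:ℝ)..t, (t - s) ^ (-α) * (-L * (s ^ (α - 1) * ml α α (-L * s ^ α))) =
      Real.Gamma (1 - α) * (-L * ml α 1 (-L * t ^ α)) := by
  have hb : 0 < 1 - α := by linarith
  have ha : ∀ k : ℕ, 0 < α * k + α := fun k => by positivity
  have hG1 : ∀ k : ℕ, 0 < Real.Gamma (α * k + α) := fun k => Real.Gamma_pos_of_pos (ha k)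
  have hpow : ∀ k : ℕ, t ^ (α * k + α + (1 - α) - 1) = (t ^ α) ^ k := fun k => by
    rw [show α * k + α + (1 - α) - 1 = α * k by ring, Real.rpow_mul ht.le, Real.rpow_natCast]
  set K : ℕ → ℝ → ℝ := fun k s => (t - s) ^ (1 - α - 1) * s ^ (α * k + α - 1) with hK
  have hKint : ∀ k, IntegrableOn (K k) (Ioc 0 t) := fun k =>
    (intervalIntegrable_iff_integrableOn_Ioc_of_le ht.le).1 (beta_int (ha k) hb ht)
  have hKval : ∀ k, ∫ s in Ioc 0 t, K k s =
      (t ^ α) ^ k * (Real.Gamma (α * k + α) * Real.Gamma (1 - α) / Real.Gamma (α * k + 1)) := by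
    intro k
    rw [← intervalIntegral.integral_of_le ht.le, hK]
    simp only
    rw [beta_real (ha k) hb ht, hpow, show α * k + α + (1 - α) = α * k + 1 by ring]
  have hKnn : ∀ k, ∀ s ∈ Ioc 0 t, 0 ≤ K k s := fun k s hs =>
    mul_nonneg (Real.rpow_nonneg (by linarith [hs.2]) _) (Real.rpow_nonneg hs.1.le _)
  set F : ℕ → ℝ → ℝ := fun k s => ((-L) ^ (k + 1) / Real.Gamma (α * k + α)) * K k s with hF
  have hFint : ∀ k, Integrable (F k) (volume.restrict (Ioc 0 t)) := fun k => (hKint k).const_mul _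
  have hval : ∀ (M : ℝ) (k : ℕ), M ^ (k + 1) / Real.Gamma (α * k + α) * ((t ^ α) ^ k *
      (Real.Gamma (α * k + α) * Real.Gamma (1 - α) / Real.Gamma (α * k + 1))) =
      Real.Gamma (1 - α) * (M * ((M * t ^ α) ^ k / Real.Gamma (α * k + 1))) := by
    intro M k
    have := (hG1 k).ne'
    rw [mul_pow, pow_succ]
    field_simp
  have hFnorm : ∀ k, ∫ s in Ioc 0 t, ‖F k s‖ =
      Real.Gamma (1 - α) * (|L| * ((|L| * t ^ α) ^ k / Real.Gamma (α * k + 1))) := by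
    intro k
    rw [← hval, ← hKval, ← integral_const_mul]
    refine setIntegral_congr_fun measurableSet_Ioc fun s hs => ?_
    simp only [hF]
    rw [norm_mul, Real.norm_of_nonneg (hKnn k s hs), norm_div, norm_pow, norm_neg,
      Real.norm_of_nonneg (hG1 k).le, Real.norm_eq_abs]
  have hsum : Summable fun k => ∫ s in Ioc 0 t, ‖F k s‖ := by
    simp only [hFnorm]
    exact ((ml_summable hα hα1 one_pos _).mul_left _).mul_left _
  have h := (hasSum_integral_of_summable_integral_norm hFint hsum).tsum_eq
  rw [intervalIntegral.integral_of_le ht.le]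
  have e1 : ∫ s in Ioc 0 t, (t - s) ^ (-α) * (-L * (s ^ (α - 1) * ml α α (-L * s ^ α))) =
      ∫ s in Ioc 0 t, ∑' k, F k s := by
    refine setIntegral_congr_fun measurableSet_Ioc fun s hs => ?_
    rw [ml, ← tsum_mul_left, ← tsum_mul_left, ← tsum_mul_left]
    refine tsum_congr fun k => ?_
    simp only [hF, hK]
    rw [show 1 - α - 1 = -α by ring, show α * k + α - 1 = (α - 1) + α * k by ring,
      Real.rpow_add hs.1, Real.rpow_mul hs.1.le, Real.rpow_natCast, mul_pow, pow_succ]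
    ring
  rw [e1, ← h, ml, ← tsum_mul_left, ← tsum_mul_left]
  refine tsum_congr fun k => ?_
  rw [← hval, ← hKval, ← integral_const_mul]

open Topology in
lemma ext_min {α : ℝ} (hα : 0 < α) (hα1 : α < 1) {f f' : ℝ → ℝ} {t : ℝ} (ht : 0 < t)
    (hc : ContinuousOn f (Icc 0 t)) (hd : ∀ s ∈ Ioc 0 t, HasDerivAt f (f' s) s)
    (hi : IntervalIntegrable f' volume 0 t)
    (hI : IntervalIntegrable (fun s => (t - s) ^ (-α) * f' s) volume 0 t)
    (hmin : ∀ s ∈ Icc 0 t, f t ≤ f s) :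
    ∫ s in (0:ℝ)..t, (t - s) ^ (-α) * f' s ≤ 0 := by
  have hstep : ∀ b ∈ Ioo 0 t, ∫ s in (0:ℝ)..b, (t - s) ^ (-α) * f' s ≤
      (t - b) ^ (-α) * (f b - f t) := by
    intro b hb
    have hu : uIcc 0 b = Icc 0 b := uIcc_of_le hb.1.le
    have hsub : Icc 0 b ⊆ Icc 0 t := Icc_subset_Icc_right hb.2.le
    have hcu : ∀ r : ℝ, ContinuousOn (fun s => (t - s) ^ r) (uIcc 0 b) := by
      intro r
      rw [hu]
      refine ContinuousOn.rpow_const (by fun_prop) fun s hs => Or.inl ?_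
      have := hs.2; have := hb.2; linarith
    have hp := intervalIntegral.integral_mul_deriv_eq_deriv_mul_of_hasDerivAt
      (a := 0) (b := b) (u := fun s => (t - s) ^ (-α)) (v := fun s => f s - f t)
      (u' := fun s => α * (t - s) ^ (-α - 1)) (v' := f') (hcu _)
      (by rw [hu]; exact (hc.mono hsub).sub continuousOn_const)
      (by
        intro x hx
        rw [min_eq_left hb.1.le, max_eq_right hb.1.le] at hx
        have hx' : t - x ≠ 0 := by have := hx.2; have := hb.2; linarith
        have := ((hasDerivAt_id x).const_sub t).rpow_const (p := -α) (Or.inl hx')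
        refine this.congr_deriv ?_
        simp)
      (by
        intro x hx
        rw [min_eq_left hb.1.le, max_eq_right hb.1.le] at hx
        exact (hd x ⟨hx.1, (hx.2.trans hb.2).le⟩).sub_const _)
      ((hcu _).const_mul α |>.intervalIntegrable)
      (hi.mono_set (by rw [hu, uIcc_of_le ht.le]; exact hsub))
    rw [hp]
    have h1 : 0 ≤ (t - 0) ^ (-α) * (f 0 - f t) :=
      mul_nonneg (Real.rpow_nonneg (by linarith) _) (by linarith [hmin 0 ⟨le_rfl, ht.le⟩])
    have h2 : 0 ≤ ∫ x in (0:ℝ)..b, α * (t - x) ^ (-α - 1) * (f x - f t) := by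
      refine intervalIntegral.integral_nonneg hb.1.le fun x hx => ?_
      have := hmin x (hsub hx)
      have : 0 ≤ t - x := by linarith [(hsub hx).2]
      have := Real.rpow_nonneg this (-α - 1)
      exact mul_nonneg (by positivity) (by linarith)
    linarith
  have hne : (𝓝[<] t).NeBot := inferInstance
  have hmem : Ioo 0 t ∈ 𝓝[<] t := Ioo_mem_nhdsLT ht
  have hl : Tendsto (fun b => ∫ s in (0:ℝ)..b, (t - s) ^ (-α) * f' s) (𝓝[<] t)
      (𝓝 (∫ s in (0:ℝ)..t, (t - s) ^ (-α) * f' s)) := by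
    have h := intervalIntegral.continuousOn_primitive_interval
      (μ := volume) (a := 0) (b := t) (f := fun s => (t - s) ^ (-α) * f' s) (by
        rw [uIcc_of_le ht.le]
        exact (intervalIntegrable_iff_integrableOn_Icc_of_le ht.le).1 hI)
    have h2 := (h t right_mem_uIcc).mono_left (nhdsWithin_mono t (s := Ioo 0 t) (by
      rw [uIcc_of_le ht.le]; exact Ioo_subset_Icc_self))
    rwa [nhdsWithin_Ioo_eq_nhdsLT ht] at h2
  have hr : Tendsto (fun b => (t - b) ^ (-α) * (f b - f t)) (𝓝[<] t) (𝓝 0) := by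
    have h1 : Tendsto (slope f t) (𝓝[<] t) (𝓝 (f' t)) :=
      (hasDerivAt_iff_tendsto_slope.1 (hd t ⟨ht, le_rfl⟩)).mono_left
        (nhdsWithin_mono t fun x hx => ne_of_lt hx)
    have h2 : Tendsto (fun b : ℝ => (t - b) ^ (1 - α)) (𝓝[<] t) (𝓝 0) := by
      have : Continuous (fun b : ℝ => (t - b) ^ (1 - α)) :=
        (continuous_const.sub continuous_id).rpow_const fun _ => Or.inr (by linarith)
      have h3 := this.tendsto t
      rw [sub_self, Real.zero_rpow (by linarith)] at h3
      exact h3.mono_left nhdsWithin_le_nhds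
    have h3 := (h1.mul h2).neg
    rw [mul_zero, neg_zero] at h3
    refine h3.congr' ?_
    filter_upwards [hmem] with b hb
    have hpos : 0 < t - b := by linarith [hb.2]
    have hne' : b - t ≠ 0 := by linarith
    rw [slope_def_field, sub_eq_neg_add 1 α, Real.rpow_add hpos, Real.rpow_one]
    field_simp
    ring
  exact le_of_tendsto_of_tendsto hl hr (by filter_upwards [hmem] with b hb using hstep b hb)

lemma mlt_bound {α : ℝ} (hα : 0 < α) (hα1 : α < 1) {L : ℝ} (hL : 0 < L) {t : ℝ} (ht : 0 ≤ t) :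
    0 ≤ ml α 1 (-L * t ^ α) ∧ ml α 1 (-L * t ^ α) ≤ 1 := by
  set f : ℝ → ℝ := fun t => ml α 1 (-L * t ^ α) with hf
  have hfc : Continuous f := mlt_continuous hα hα1 one_pos L
  have hf0 : f 0 = 1 := by simp [hf, Real.zero_rpow hα.ne', ml_zero]
  have hG : 0 < Real.Gamma (1 - α) := Real.Gamma_pos_of_pos (by linarith)
  change 0 ≤ f t ∧ f t ≤ 1
  constructor
  · by_contra! hneg
    obtain ⟨t0, ht0, hmin⟩ := isCompact_Icc.exists_isMinOn (nonempty_Icc.2 ht) hfc.continuousOn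
    have h1 : f t0 ≤ f t := hmin (right_mem_Icc.2 ht)
    have h0 : 0 < t0 := lt_of_le_of_ne ht0.1 (by rintro rfl; linarith)
    have h2 := ext_min hα hα1 h0 hfc.continuousOn
      (fun s hs => mlt_hasDerivAt hα hα1 L hs.1) (mlt_deriv_int hα hα1 L t0)
      (mlt_caputo_int hα hα1 L h0) (fun s hs => hmin ⟨hs.1, hs.2.trans ht0.2⟩)
    rw [mlt_caputo_eq hα hα1 L h0] at h2
    have h3 : 0 < -L * f t0 := mul_pos_of_neg_of_neg (by linarith) (by linarith)
    exact absurd h2 (not_le.2 (mul_pos hG h3))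
  · by_contra! hneg
    obtain ⟨t0, ht0, hmax⟩ := isCompact_Icc.exists_isMaxOn (nonempty_Icc.2 ht) hfc.continuousOn
    have h1 : f t ≤ f t0 := hmax (right_mem_Icc.2 ht)
    have h0 : 0 < t0 := lt_of_le_of_ne ht0.1 (by rintro rfl; linarith)
    have h2 := ext_min hα hα1 h0 hfc.neg.continuousOn
      (fun s hs => (mlt_hasDerivAt hα hα1 L hs.1).neg) (mlt_deriv_int hα hα1 L t0).neg
      (by simp only [mul_neg _ (-L * _)]; exact (mlt_caputo_int hα hα1 L h0).neg)
      (fun s hs => neg_le_neg (hmax ⟨hs.1, hs.2.trans ht0.2⟩))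
    simp only [mul_neg _ (-L * _)] at h2
    rw [intervalIntegral.integral_neg, mlt_caputo_eq hα hα1 L h0] at h2
    have h3 : 0 < L * f t0 := mul_pos hL (by linarith)
    have h4 := mul_pos hG h3
    simp only [hf] at h4
    linarith

lemma unif_lemma {β : Type*} {S : Set β} {F G : ℕ → β → ℝ} {A : ℕ → ℝ} {g : β → ℝ}
    (hA : Summable A) (hG : TendstoUniformlyOn (fun N x => ∑ i ∈ Finset.range N, G i x) g atTop S)
    (hG0 : ∀ i, ∀ x ∈ S, 0 ≤ G i x) (hb : ∀ i, ∀ x ∈ S, |F i x| ≤ A i + G i x) :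
    TendstoUniformlyOn (fun N x => ∑ i ∈ Finset.range N, F i x) (fun x => ∑' i, F i x) atTop S := by
  have hGs : ∀ x ∈ S, HasSum (fun i => G i x) (g x) := fun x hx =>
    (hasSum_iff_tendsto_nat_of_nonneg (fun i => hG0 i x hx) _).2 (hG.tendsto_at hx)
  have hAt := hA.hasSum.tendsto_sum_nat
  rw [Metric.tendstoUniformlyOn_iff] at hG ⊢
  rw [Metric.tendsto_nhds] at hAt
  intro ε hε
  filter_upwards [hG (ε / 2) (by positivity), hAt (ε / 2) (by positivity)] with N h1 h2 x hx
  have hB : Summable fun i => A i + G i x := hA.add (hGs x hx).summable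
  have hF : Summable fun i => F i x := Summable.of_norm_bounded hB fun i => hb i x hx
  have e1 := hF.sum_add_tsum_nat_add N
  have e2 := hB.sum_add_tsum_nat_add N
  rw [(hA.hasSum.add (hGs x hx)).tsum_eq, Finset.sum_add_distrib] at e2
  have h3 : |∑' i, F (i + N) x| ≤ ∑' i, (A (i + N) + G (i + N) x) := by
    rw [← Real.norm_eq_abs]
    exact tsum_of_norm_bounded ((summable_nat_add_iff N).2 hB).hasSum fun i => hb _ x hx
  have h1' := h1 x hx
  rw [Real.dist_eq] at h1' h2 ⊢
  rw [← e1, add_sub_cancel_left]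
  have := le_abs_self (g x - ∑ i ∈ Finset.range N, G i x)
  have := neg_abs_le (∑ i ∈ Finset.range N, A i - ∑' i, A i)
  linarith

/-- the formal solution is a generalized solution, 1D version of
Theorem 4: with Sturm–Liouville eigendata `(λ_i, X_i)` on `[0,l]`, coefficients
with `∑ λ_i² c_i² < ∞` and `u₀ = ∑ c_i X_i` converging uniformly on `[0,l]`:
(i) the partial sums `u_k(x,t) = ∑_{i<k} c_i E_α(−λ_i t^α) X_i(x)` converge uniformly
on `[0,l]×[0,T]` to a continuous function `u`; (ii) each `u_k` is a classical solution
with zero boundary conditions and initial values `∑_{i<k} c_i X_i`; (iii) these initial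
values converge uniformly on `[0,l]` to `u₀`. Hence `u` is a generalized solution of
the initial-boundary-value problem with initial condition `u₀` and zero boundary
conditions. -/
theorem formal_solution_is_generalized_1d (α T l : ℝ)
    (hα : 0 < α) (hα1 : α < 1) (hT : 0 < T)
    (p q : ℝ → ℝ) (lam : ℕ → ℝ) (X : ℕ → ℝ → ℝ)
    (hl : 0 < l)
    (hp : ContDiffOn ℝ 1 p (Set.Icc 0 l)) (hppos : ∀ x ∈ Set.Icc (0:ℝ) l, 0 < p x)
    (hq : ContinuousOn q (Set.Icc 0 l)) (hqnn : ∀ x ∈ Set.Icc (0:ℝ) l, 0 ≤ q x)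
    (hlam : ∀ i, 0 < lam i) (hlamtop : Filter.Tendsto lam Filter.atTop Filter.atTop)
    (hX : ∀ i, ContDiffOn ℝ 2 (X i) (Set.Icc 0 l))
    (heig : ∀ i, ∀ x ∈ Set.Ioo (0:ℝ) l,
      -(deriv (fun y => p y * deriv (X i) y) x) + q x * X i x = lam i * X i x)
    (hbc0 : ∀ i, X i 0 = 0) (hbcl : ∀ i, X i l = 0)
    (horth : ∀ i j, (∫ x in (0:ℝ)..l, X i x * X j x) = if i = j then 1 else 0)
    (hser1 : ∃ g : ℝ → ℝ, TendstoUniformlyOn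
      (fun N x => ∑ i ∈ Finset.range N, (X i x) ^ 2 / lam i) g Filter.atTop
      (Set.Icc 0 l))
    (c : ℕ → ℝ) (hc : Summable fun i => lam i ^ 2 * c i ^ 2)
    (u₀ : ℝ → ℝ)
    (hu₀ : TendstoUniformlyOn (fun N x => ∑ i ∈ Finset.range N, c i * X i x) u₀
      Filter.atTop (Set.Icc 0 l)) :
    let uk : ℕ → ℝ → ℝ → ℝ := fun k x t =>
      ∑ i ∈ Finset.range k, c i * ml α 1 (-lam i * t ^ α) * X i x
    let u : ℝ → ℝ → ℝ := fun x t => ∑' i, c i * ml α 1 (-lam i * t ^ α) * X i x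
    -- (i) uniform convergence to the continuous function u
    (TendstoUniformlyOn (fun k (z : ℝ × ℝ) => uk k z.1 z.2)
      (fun z : ℝ × ℝ => u z.1 z.2) Filter.atTop (Set.Icc 0 l ×ˢ Set.Icc 0 T)) ∧
    ContinuousOn (fun z : ℝ × ℝ => u z.1 z.2) (Set.Icc 0 l ×ˢ Set.Icc 0 T) ∧
    -- (ii) each partial sum is a classical solution with the stated initial values
    (∀ k, IsClassicalSolution1D α T l p q (uk k) ∧
      ∀ x ∈ Set.Icc (0:ℝ) l, uk k x 0 = ∑ i ∈ Finset.range k, c i * X i x) ∧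
    -- (iii) the initial values converge uniformly to u₀
    (TendstoUniformlyOn (fun k x => uk k x 0) u₀ Filter.atTop (Set.Icc 0 l)) ∧
    -- hence u is a generalized solution
    IsGeneralizedSolution1D α T l p q u₀ u := by
  intro uk u
  have hXc : ∀ i, ContinuousOn (X i) (Icc 0 l) := fun i => (hX i).continuousOn
  have huk0 : ∀ k x, uk k x 0 = ∑ i ∈ Finset.range k, c i * X i x := by
    intro k x
    simp [uk, Real.zero_rpow hα.ne', ml_zero]
  have hukc : ∀ k, ContinuousOn (fun z : ℝ × ℝ => uk k z.1 z.2) (Icc 0 l ×ˢ Icc 0 T) := by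
    intro k
    refine continuousOn_finset_sum _ fun i _ => ContinuousOn.mul ?_ ?_
    · exact (continuous_const.mul
        ((mlt_continuous hα hα1 one_pos (lam i)).comp continuous_snd)).continuousOn
    · exact (hXc i).comp continuousOn_fst fun z hz => hz.1
  have hclass : ∀ k, IsClassicalSolution1D α T l p q (uk k) := by
    intro k
    refine ⟨hukc k, ?_, ?_⟩
    · intro x hx t ht
      have hG : Real.Gamma (1 - α) ≠ 0 := (Real.Gamma_pos_of_pos (by linarith)).ne'
      have hL : caputo α (uk k x) t = ∑ i ∈ Finset.range k,
          c i * (-lam i * ml α 1 (-lam i * t ^ α)) * X i x := by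
        have e : ∫ s in (0:ℝ)..t, (t - s) ^ (-α) * deriv (uk k x) s =
            ∫ s in (0:ℝ)..t, ∑ i ∈ Finset.range k, (c i * X i x) * ((t - s) ^ (-α) *
              (-lam i * (s ^ (α - 1) * ml α α (-lam i * s ^ α)))) := by
          rw [intervalIntegral.integral_of_le ht.1.le, intervalIntegral.integral_of_le ht.1.le]
          refine setIntegral_congr_fun measurableSet_Ioc fun s hs => ?_
          have hd : HasDerivAt (uk k x) (∑ i ∈ Finset.range k,
              c i * (-lam i * (s ^ (α - 1) * ml α α (-lam i * s ^ α))) * X i x) s :=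
            HasDerivAt.fun_sum fun i _ =>
              ((mlt_hasDerivAt hα hα1 (lam i) hs.1).const_mul (c i)).mul_const (X i x)
          simp only [hd.deriv, Finset.mul_sum]
          exact Finset.sum_congr rfl fun i _ => by ring
        rw [caputo, e, intervalIntegral.integral_finset_sum
          (fun i _ => (mlt_caputo_int hα hα1 (lam i) ht.1).const_mul _), Finset.mul_sum]
        refine Finset.sum_congr rfl fun i _ => ?_
        rw [intervalIntegral.integral_const_mul, mlt_caputo_eq hα hα1 _ ht.1]
        field_simp
      have hnb : ∀ y ∈ Ioo 0 l, Icc 0 l ∈ nhds y := fun y hy => Icc_mem_nhds hy.1 hy.2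
      have hdX : ∀ i, ∀ y ∈ Ioo 0 l, DifferentiableAt ℝ (X i) y := fun i y hy =>
        ((hX i).contDiffAt (hnb y hy)).differentiableAt (by norm_num)
      have hddX : ∀ i, DifferentiableAt ℝ (deriv (X i)) x := fun i => by
        have h1 : ContDiffOn ℝ 2 (X i) (Ioo 0 l) := (hX i).mono Ioo_subset_Icc_self
        have h2 : ContDiffOn ℝ 1 (deriv (X i)) (Ioo 0 l) :=
          h1.deriv_of_isOpen isOpen_Ioo (by norm_num)
        exact (h2.contDiffAt (isOpen_Ioo.mem_nhds hx)).differentiableAt (by norm_num)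
      have hdp : DifferentiableAt ℝ p x :=
        (hp.contDiffAt (hnb x hx)).differentiableAt (by norm_num)
      have hR : deriv (fun y => p y * deriv (fun z => uk k z t) y) x =
          ∑ i ∈ Finset.range k, c i * ml α 1 (-lam i * t ^ α) *
            deriv (fun y => p y * deriv (X i) y) x := by
        have e : (fun y => p y * deriv (fun z => uk k z t) y) =ᶠ[nhds x]
            fun y => ∑ i ∈ Finset.range k, c i * ml α 1 (-lam i * t ^ α) *
              (p y * deriv (X i) y) := by
          filter_upwards [isOpen_Ioo.mem_nhds hx] with y hy
          have hd : HasDerivAt (fun z => uk k z t) (∑ i ∈ Finset.range k,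
              c i * ml α 1 (-lam i * t ^ α) * deriv (X i) y) y :=
            HasDerivAt.fun_sum fun i _ => ((hdX i y hy).hasDerivAt).const_mul _
          rw [hd.deriv, Finset.mul_sum]
          exact Finset.sum_congr rfl fun i _ => by ring
        rw [e.deriv_eq]
        exact (HasDerivAt.fun_sum fun i _ =>
          ((hdp.mul (hddX i)).hasDerivAt).const_mul _).deriv
      rw [hL, hR, Finset.mul_sum, ← Finset.sum_sub_distrib]
      refine Finset.sum_congr rfl fun i _ => ?_
      have := heig i x hx
      have e : deriv (fun y => p y * deriv (X i) y) x = q x * X i x - lam i * X i x := by linarith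
      rw [e]
      ring
    · intro t _
      simp [uk, hbc0, hbcl]
  have hini : TendstoUniformlyOn (fun k x => uk k x 0) u₀ atTop (Icc 0 l) := by
    simpa only [huk0] using hu₀
  have hunif : TendstoUniformlyOn (fun k (z : ℝ × ℝ) => uk k z.1 z.2)
      (fun z : ℝ × ℝ => u z.1 z.2) atTop (Icc 0 l ×ˢ Icc 0 T) := by
    obtain ⟨g, hg⟩ := hser1
    have hA : Summable fun i => lam i * c i ^ 2 := by
      refine Summable.of_norm_bounded_eventually_nat hc ?_
      filter_upwards [hlamtop.eventually_ge_atTop 1] with i hi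
      rw [Real.norm_of_nonneg (mul_nonneg (hlam i).le (sq_nonneg _))]
      exact mul_le_mul_of_nonneg_right (by nlinarith) (sq_nonneg _)
    have hg' : TendstoUniformlyOn
        (fun N (z : ℝ × ℝ) => ∑ i ∈ Finset.range N, (X i z.1) ^ 2 / lam i)
        (fun z => g z.1) atTop (Icc 0 l ×ˢ Icc 0 T) := by
      intro v hv
      filter_upwards [hg v hv] with N hN z hz using hN z.1 hz.1
    refine unif_lemma (F := fun i (z : ℝ × ℝ) => c i * ml α 1 (-lam i * z.2 ^ α) * X i z.1)
      hA hg' (fun i z _ => div_nonneg (sq_nonneg _) (hlam i).le) ?_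
    intro i z hz
    have hb := mlt_bound hα hα1 (hlam i) hz.2.1
    have h1 : |c i * ml α 1 (-lam i * z.2 ^ α) * X i z.1| ≤ |c i| * |X i z.1| := by
      rw [abs_mul, abs_mul, abs_of_nonneg hb.1]
      gcongr
      exact mul_le_of_le_one_right (abs_nonneg _) hb.2
    refine h1.trans ?_
    have hl := hlam i
    have h2 : lam i * c i ^ 2 + X i z.1 ^ 2 / lam i - |c i| * |X i z.1|
        = ((lam i * |c i| - |X i z.1|) ^ 2 + lam i * |c i| * |X i z.1|) / lam i := by
      rw [← sq_abs (c i), ← sq_abs (X i z.1)]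
      field_simp
      ring
    have h3 : 0 ≤ ((lam i * |c i| - |X i z.1|) ^ 2 + lam i * |c i| * |X i z.1|) / lam i := by
      positivity
    linarith
  have hcont : ContinuousOn (fun z : ℝ × ℝ => u z.1 z.2) (Icc 0 l ×ˢ Icc 0 T) :=
    hunif.continuousOn (Eventually.of_forall hukc).frequently
  exact ⟨hunif, hcont, fun k => ⟨hclass k, fun x _ => huk0 k x⟩, hini, hcont, uk, hclass, hini,
    hunif⟩
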